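/- arXiv:1004.0332 — 4 statements merged into one kernel-verified Lean document; each statement's English description precedes it below -/
import Mathlib

section
/- Let ω be a cut-off function. Then for Re z > 0 one has ∫_0^∞ r^{z−1} ω(r) dr = −z^{−1} ∫_0^∞ r^{z} ω'(r) dr, the right-hand side Φ(z) := −z^{−1} ∫_0^∞ r^{z} ω'(r) dr is meromorphic on all of ℂ (its only pole being a simple pole at z = 0), and for every N ∈ ℕ and all reals a ≤ b there is C > 0 such that |Φ(σ+iρ)| ≤ C |ρ|^{−N} for all σ ∈ [a,b] and all |ρ| ≥ 1. (This is the rapid decay of the Mellin transform of a cut-off function on vertical lines, uniformly on compact intervals of the real part, used in the construction of potentials of analytic functionals.) -/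
open MeasureTheory Set

/-!
Writing `M f` for the Mellin transform, integration by parts gives `M f' (s + 1) = -s • M f s` as
soon as the boundary terms `r ^ s • f r` vanish. For a cut-off function this holds on `0 < re s`,
while its derivative vanishes near `0` and `∞`, so that `M ω'` is entire and the identity can be
iterated on every vertical strip. Translation by `1` keeps the imaginary part, hence each iteration
gains a factor `|im s|`.
-/

open Filter Asymptotics Topology

theorem integral_Ioi_of_hasDerivAt_of_tendsto_nhdsGT {E : Type*} [NormedAddCommGroup E]
    [NormedSpace ℝ E] [CompleteSpace E] {f f' : ℝ → E} {a : ℝ} {l m : E}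
    (hderiv : ∀ x ∈ Ioi a, HasDerivAt f (f' x) x) (hint : IntegrableOn f' (Ioi a))
    (hl : Tendsto f (𝓝[>] a) (𝓝 l)) (hm : Tendsto f atTop (𝓝 m)) :
    ∫ x in Ioi a, f' x = m - l := by
  have hupdate {x : ℝ} (hx : x ≠ a) : Function.update f a l =ᶠ[𝓝 x] f :=
    (eventually_ne_nhds hx).mono fun y hy => Function.update_of_ne hy l f
  have hcont : ContinuousWithinAt (Function.update f a l) (Ici a) a := by
    rwa [continuousWithinAt_update_same, Ici_sdiff_left]
  have htop : Tendsto (Function.update f a l) atTop (𝓝 m) :=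
    hm.congr' <| (eventually_ne_atTop a).mono fun x hx => (Function.update_of_ne hx l f).symm
  simpa only [Function.update_self] using integral_Ioi_of_hasDerivAt_of_tendsto hcont
    (fun x hx => (hderiv x hx).congr_of_eventuallyEq (hupdate (ne_of_gt hx))) hint htop

theorem rpow_le_rpow_add_rpow {r a b x : ℝ} (hr : 0 < r) (hx : x ∈ Icc a b) :
    r ^ x ≤ r ^ a + r ^ b := by
  rcases le_total 1 r with h | h
  · exact (Real.rpow_le_rpow_of_exponent_le h hx.2).trans
      (le_add_of_nonneg_left (Real.rpow_nonneg hr.le a))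
  · exact (Real.rpow_le_rpow_of_exponent_ge hr h hx.1).trans
      (le_add_of_nonneg_right (Real.rpow_nonneg hr.le b))

section Mellin

variable {E : Type*} [NormedAddCommGroup E] [NormedSpace ℂ E]

theorem mellin_deriv_add_one [CompleteSpace E] {f : ℝ → E} {s : ℂ}
    (hf : DifferentiableOn ℝ f (Ioi 0)) (hconv : MellinConvergent f s)
    (hconv' : MellinConvergent (deriv f) (s + 1))
    (hzero : Tendsto (fun r : ℝ => (r : ℂ) ^ s • f r) (𝓝[>] 0) (𝓝 0))
    (htop : Tendsto (fun r : ℝ => (r : ℂ) ^ s • f r) atTop (𝓝 0)) :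
    mellin (deriv f) (s + 1) = -(s • mellin f s) := by
  have hderiv : ∀ r ∈ Ioi (0 : ℝ), HasDerivAt (fun r : ℝ => (r : ℂ) ^ s • f r)
      ((r : ℂ) ^ (s + 1 - 1) • deriv f r + s • (r : ℂ) ^ (s - 1) • f r) r := fun r hr => by
    have hcpow : HasDerivAt (fun r : ℝ => (r : ℂ) ^ s) (s * (r : ℂ) ^ (s - 1)) r := by
      simpa using! ((hasDerivAt_id (r : ℂ)).cpow_const (c := s)
        (Complex.ofReal_mem_slitPlane.2 hr)).comp_ofReal
    simpa only [add_sub_cancel_right, mul_smul] using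
      hcpow.fun_smul (hf.differentiableAt (Ioi_mem_nhds hr)).hasDerivAt
  have hparts := integral_Ioi_of_hasDerivAt_of_tendsto_nhdsGT hderiv
    (hconv'.add (hconv.fun_smul s)) hzero htop
  rw [integral_add hconv' (hconv.fun_smul s), integral_smul, sub_zero] at hparts
  exact eq_neg_of_add_eq_zero_left hparts

theorem exists_norm_mellin_le {f : ℝ → E} {a b : ℝ} (ha : MellinConvergent f a)
    (hb : MellinConvergent f b) : ∃ C : ℝ, ∀ s : ℂ, s.re ∈ Icc a b → ‖mellin f s‖ ≤ C := by
  refine ⟨∫ r in Ioi (0 : ℝ), (‖(r : ℂ) ^ ((a : ℂ) - 1) • f r‖ + ‖(r : ℂ) ^ ((b : ℂ) - 1) • f r‖),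
    fun s hs => norm_integral_le_of_norm_le (ha.norm.add hb.norm) ?_⟩
  filter_upwards [ae_restrict_mem measurableSet_Ioi] with r hr
  simp only [norm_smul, Complex.norm_cpow_eq_rpow_re_of_pos hr, Complex.sub_re, Complex.ofReal_re,
    Complex.one_re, ← add_mul]
  gcongr
  exact rpow_le_rpow_add_rpow hr ⟨sub_le_sub_right hs.1 1, sub_le_sub_right hs.2 1⟩

end Mellin

/-- A vector-valued cut-off function on `(0, ∞)`: smooth, equal to the constant `c` near `0`, and
zero near `∞`. Only its values on `(0, ∞)` are constrained. A scalar cut-off function has `c = 1`;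
allowing `c = 0` (a test function on `(0, ∞)`) makes the notion stable under differentiation. -/
structure IsCutoff {E : Type*} [NormedAddCommGroup E] [NormedSpace ℝ E] (c : E) (f : ℝ → E) :
    Prop where
  contDiffOn : ContDiffOn ℝ (⊤ : ℕ∞) f (Ioi 0)
  eventuallyEq_nhdsGT : f =ᶠ[𝓝[>] 0] fun _ => c
  eventuallyEq_atTop : f =ᶠ[atTop] 0

namespace IsCutoff

section Real

variable {E : Type*} [NormedAddCommGroup E] [NormedSpace ℝ E] {c : E} {f : ℝ → E}

theorem of_hasCompactSupport (hf : ContDiff ℝ (⊤ : ℕ∞) f) (hcs : HasCompactSupport f)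
    (hc : f =ᶠ[𝓝 0] fun _ => c) : IsCutoff c f where
  contDiffOn := hf.contDiffOn
  eventuallyEq_nhdsGT := hc.filter_mono nhdsWithin_le_nhds
  eventuallyEq_atTop := by
    rw [hasCompactSupport_iff_eventuallyEq, coclosedCompact_eq_cocompact] at hcs
    exact hcs.filter_mono atTop_le_cocompact

theorem clm_comp {F : Type*} [NormedAddCommGroup F] [NormedSpace ℝ F] (L : E →L[ℝ] F)
    (hf : IsCutoff c f) : IsCutoff (L c) fun r => L (f r) where
  contDiffOn := L.contDiff.comp_contDiffOn hf.contDiffOn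
  eventuallyEq_nhdsGT := hf.eventuallyEq_nhdsGT.fun_comp L
  eventuallyEq_atTop := hf.eventuallyEq_atTop.mono fun r hr => by
    simp only [hr, Pi.zero_apply, map_zero]

theorem differentiableOn (hf : IsCutoff c f) : DifferentiableOn ℝ f (Ioi 0) :=
  hf.contDiffOn.differentiableOn (by simp)

theorem locallyIntegrableOn (hf : IsCutoff c f) : LocallyIntegrableOn f (Ioi 0) :=
  hf.contDiffOn.continuousOn.locallyIntegrableOn measurableSet_Ioi

protected theorem deriv (hf : IsCutoff c f) : IsCutoff 0 (deriv f) where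
  contDiffOn := ((contDiffOn_infty_iff_deriv_of_isOpen isOpen_Ioi).1 hf.contDiffOn).2
  eventuallyEq_nhdsGT := by
    filter_upwards [eventually_eventually_nhdsWithin.2 hf.eventuallyEq_nhdsGT, self_mem_nhdsWithin]
      with r hfr hr
    rw [(isOpen_Ioi.nhdsWithin_eq hr ▸ hfr : f =ᶠ[𝓝 r] fun _ => c).deriv_eq, deriv_const]
  eventuallyEq_atTop := by
    obtain ⟨R, hR⟩ := eventually_atTop.1 hf.eventuallyEq_atTop
    filter_upwards [eventually_gt_atTop R] with r hr
    have hfr : f =ᶠ[𝓝 r] fun _ => 0 := (eventually_ge_nhds hr).mono hR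
    rw [hfr.deriv_eq, deriv_const, Pi.zero_apply]

theorem isBigO_atTop (hf : IsCutoff c f) (g : ℝ → ℝ) : f =O[atTop] g :=
  hf.eventuallyEq_atTop.trans_isBigO (isBigO_zero _ _)

theorem exists_lt_isBigO_rpow (hf : IsCutoff c f) {x : ℝ} (hx : c = 0 ∨ 0 < x) :
    ∃ b < x, f =O[𝓝[>] 0] fun r => r ^ (-b) := by
  rcases hx with rfl | hx
  · exact ⟨x - 1, sub_one_lt x, hf.eventuallyEq_nhdsGT.trans_isBigO (isBigO_zero _ _)⟩
  · refine ⟨0, hx, hf.eventuallyEq_nhdsGT.trans_isBigO ?_⟩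
    simpa only [neg_zero, Real.rpow_zero] using isBigO_const_const c (one_ne_zero (α := ℝ)) _

theorem integral_deriv [CompleteSpace E] (hf : IsCutoff c f)
    (hint : IntegrableOn (deriv f) (Ioi 0)) : ∫ r in Ioi 0, deriv f r = -c :=
  (integral_Ioi_of_hasDerivAt_of_tendsto_nhdsGT
    (fun _ hr => (hf.differentiableOn.differentiableAt (Ioi_mem_nhds hr)).hasDerivAt) hint
    hf.eventuallyEq_nhdsGT.tendsto hf.eventuallyEq_atTop.tendsto).trans (zero_sub c)

end Real

variable {E : Type*} [NormedAddCommGroup E] [NormedSpace ℂ E] {c : E} {f : ℝ → E}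

theorem mellinConvergent (hf : IsCutoff c f) {s : ℂ} (hs : c = 0 ∨ 0 < s.re) :
    MellinConvergent f s := by
  obtain ⟨b, hb, hfb⟩ := hf.exists_lt_isBigO_rpow hs
  exact mellinConvergent_of_isBigO_rpow hf.locallyIntegrableOn (hf.isBigO_atTop _)
    (lt_add_one s.re) hfb hb

theorem differentiable_mellin (hf : IsCutoff 0 f) : Differentiable ℂ (mellin f) :=
  fun s => by
    obtain ⟨b, hb, hfb⟩ := hf.exists_lt_isBigO_rpow (x := s.re) (Or.inl rfl)
    exact mellin_differentiableAt_of_isBigO_rpow hf.locallyIntegrableOn (hf.isBigO_atTop _)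
      (lt_add_one s.re) hfb hb

theorem tendsto_cpow_smul_nhdsGT (hf : IsCutoff c f) {s : ℂ} (hs : c = 0 ∨ 0 < s.re) :
    Tendsto (fun r : ℝ => (r : ℂ) ^ s • f r) (𝓝[>] 0) (𝓝 0) := by
  suffices h : Tendsto (fun r : ℝ => (r : ℂ) ^ s • c) (𝓝[>] 0) (𝓝 0) from
    h.congr' (hf.eventuallyEq_nhdsGT.mono fun r hr => by simp only [hr])
  rcases hs with rfl | hs
  · simpa only [smul_zero] using tendsto_const_nhds
  · have hcpow := (Complex.continuous_ofReal_cpow_const hs).tendsto 0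
    rw [Complex.ofReal_zero, Complex.zero_cpow (by rintro rfl; simp at hs)] at hcpow
    simpa only [zero_smul] using (hcpow.mono_left nhdsWithin_le_nhds).smul_const c

theorem tendsto_cpow_smul_atTop (hf : IsCutoff c f) (s : ℂ) :
    Tendsto (fun r : ℝ => (r : ℂ) ^ s • f r) atTop (𝓝 0) :=
  tendsto_const_nhds.congr' <| hf.eventuallyEq_atTop.mono fun r hr => by
    simp only [hr, Pi.zero_apply, smul_zero]

theorem mellin_deriv [CompleteSpace E] (hf : IsCutoff c f) {s : ℂ} (hs : c = 0 ∨ 0 < s.re) :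
    mellin (deriv f) (s + 1) = -(s • mellin f s) :=
  mellin_deriv_add_one hf.differentiableOn (hf.mellinConvergent hs)
    (hf.deriv.mellinConvergent (Or.inl rfl)) (hf.tendsto_cpow_smul_nhdsGT hs)
    (hf.tendsto_cpow_smul_atTop s)

theorem mellin_deriv_one [CompleteSpace E] (hf : IsCutoff c f) :
    mellin (deriv f) 1 = -c := by
  have hconv : MellinConvergent (deriv f) 1 := hf.deriv.mellinConvergent (Or.inl rfl)
  simp only [MellinConvergent, mellin, sub_self, Complex.cpow_zero, one_smul] at hconv ⊢
  exact hf.integral_deriv hconv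

theorem exists_abs_im_pow_mul_norm_mellin_le [CompleteSpace E] (hf : IsCutoff 0 f)
    (N : ℕ) (a b : ℝ) :
    ∃ C : ℝ, ∀ s : ℂ, s.re ∈ Icc a b → |s.im| ^ N * ‖mellin f s‖ ≤ C := by
  induction N generalizing f a b with
  | zero =>
    simpa only [pow_zero, one_mul] using exists_norm_mellin_le
      (hf.mellinConvergent (s := a) (Or.inl rfl)) (hf.mellinConvergent (s := b) (Or.inl rfl))
  | succ N ih =>
    obtain ⟨C, hC⟩ := ih hf.deriv (a + 1) (b + 1)
    refine ⟨C, fun s hs => ?_⟩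
    calc |s.im| ^ (N + 1) * ‖mellin f s‖
        = |s.im| ^ N * (|s.im| * ‖mellin f s‖) := by ring
      _ ≤ |s.im| ^ N * (‖s‖ * ‖mellin f s‖) := by gcongr; exact s.abs_im_le_norm
      _ = |(s + 1).im| ^ N * ‖mellin (deriv f) (s + 1)‖ := by
        rw [hf.mellin_deriv (Or.inl rfl), norm_neg, norm_smul, Complex.add_im, Complex.one_im,
          add_zero]
      _ ≤ C := hC (s + 1) ⟨add_le_add_left hs.1 1, add_le_add_left hs.2 1⟩

theorem exists_norm_inv_smul_mellin_add_one_le [CompleteSpace E] (hf : IsCutoff 0 f)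
    (N : ℕ) (a b : ℝ) :
    ∃ C : ℝ, 0 < C ∧ ∀ s : ℂ, s.re ∈ Icc a b → 1 ≤ |s.im| →
      ‖s⁻¹ • mellin f (s + 1)‖ ≤ C * (|s.im| ^ N)⁻¹ := by
  obtain ⟨C, hC⟩ := hf.exists_abs_im_pow_mul_norm_mellin_le N (a + 1) (b + 1)
  refine ⟨max C 1, by positivity, fun s hs him => ?_⟩
  have hinv : ‖s⁻¹‖ ≤ 1 := by
    rw [norm_inv]
    exact inv_le_one_of_one_le₀ (him.trans s.abs_im_le_norm)
  have hdecay : |s.im| ^ N * ‖mellin f (s + 1)‖ ≤ C := by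
    simpa only [Complex.add_im, Complex.one_im, add_zero] using
      hC (s + 1) ⟨add_le_add_left hs.1 1, add_le_add_left hs.2 1⟩
  rw [← div_eq_mul_inv, le_div_iff₀' (by positivity), norm_smul]
  calc |s.im| ^ N * (‖s⁻¹‖ * ‖mellin f (s + 1)‖)
      ≤ |s.im| ^ N * (1 * ‖mellin f (s + 1)‖) := by gcongr
    _ ≤ max C 1 := by
      rw [one_mul]
      exact hdecay.trans (le_max_left C 1)

end IsCutoff

theorem mellin_cutoff_by_parts_and_decay_general {E : Type*} [NormedAddCommGroup E]
    [NormedSpace ℂ E] [CompleteSpace E] {c : E} {ω : ℝ → E} (hω : IsCutoff c ω) :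
    let Ψ : ℂ → E := fun z => ∫ r in Ioi (0 : ℝ), (r : ℂ) ^ z • deriv ω r
    (∀ z : ℂ, 0 < z.re → (∫ r in Ioi (0 : ℝ), (r : ℂ) ^ (z - 1) • ω r) = -z⁻¹ • Ψ z) ∧
      Differentiable ℂ Ψ ∧ Ψ 0 = -c ∧
      ∀ (N : ℕ) (a b : ℝ), ∃ C : ℝ, 0 < C ∧ ∀ σ ∈ Icc a b, ∀ ρ : ℝ, 1 ≤ |ρ| →
        ‖-((σ : ℂ) + ρ * Complex.I)⁻¹ • Ψ ((σ : ℂ) + ρ * Complex.I)‖ ≤ C * (|ρ| ^ N)⁻¹ := by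
  intro Ψ
  have hΨ (z : ℂ) : Ψ z = mellin (deriv ω) (z + 1) := by
    simp only [Ψ, mellin, add_sub_cancel_right]
  refine ⟨fun z hz => ?_, ?_, ?_, fun N a b => ?_⟩
  · have hz0 : z ≠ 0 := by rintro rfl; simp at hz
    rw [hΨ, hω.mellin_deriv (Or.inr hz), smul_neg, neg_smul, neg_neg, inv_smul_smul₀ hz0, mellin]
  · rw [funext hΨ]
    exact hω.deriv.differentiable_mellin.comp (differentiable_id.add_const 1)
  · rw [hΨ, zero_add, hω.mellin_deriv_one]
  · obtain ⟨C, hC0, hC⟩ := hω.deriv.exists_norm_inv_smul_mellin_add_one_le N a b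
    refine ⟨C, hC0, fun σ hσ ρ hρ => ?_⟩
    rw [neg_smul, norm_neg, hΨ]
    simpa using hC (σ + ρ * Complex.I) (by simpa using hσ) (by simpa using hρ)

/-- For a cut-off function `ω` one has, for `Re z > 0`,
`∫_0^∞ r^{z-1} ω(r) dr = -z⁻¹ ∫_0^∞ r^z ω'(r) dr`; the function
`Ψ(z) := ∫_0^∞ r^z ω'(r) dr` is entire with `Ψ(0) = -1` (so that
`Φ(z) = -z⁻¹ Ψ(z)` is meromorphic on `ℂ` with a simple pole at `z = 0` as its
only pole), and `Φ` is rapidly decreasing on vertical lines, uniformly for the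
real part in compact intervals. -/
theorem mellin_cutoff_by_parts_and_decay
    (ω : ℝ → ℝ) (hω : ContDiff ℝ (⊤ : ℕ∞) ω) (hcs : HasCompactSupport ω)
    (hone : ∀ᶠ r in nhds (0 : ℝ), ω r = 1) :
    let Ψ : ℂ → ℂ := fun z => ∫ r in Ioi (0 : ℝ), (r : ℂ) ^ z * ((deriv ω r : ℝ) : ℂ)
    (∀ z : ℂ, 0 < z.re →
        (∫ r in Ioi (0 : ℝ), (r : ℂ) ^ (z - 1) * (ω r : ℂ)) = -z⁻¹ * Ψ z) ∧
      Differentiable ℂ Ψ ∧ Ψ 0 = -1 ∧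
      ∀ (N : ℕ) (a b : ℝ), a ≤ b → ∃ C : ℝ, 0 < C ∧
        ∀ σ ∈ Icc a b, ∀ ρ : ℝ, 1 ≤ |ρ| →
          ‖-((σ : ℂ) + ρ * Complex.I)⁻¹ * Ψ ((σ : ℂ) + ρ * Complex.I)‖
            ≤ C * (|ρ| ^ N)⁻¹ := by
  have hderiv (r : ℝ) : deriv (fun r => (ω r : ℂ)) r = ((deriv ω r : ℝ) : ℂ) :=
    (hω.differentiable (by simp) r).hasDerivAt.ofReal_comp.deriv
  have hcutoff : IsCutoff (1 : ℂ) fun r => (ω r : ℂ) := by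
    simpa using (IsCutoff.of_hasCompactSupport hω hcs hone).clm_comp Complex.ofRealCLM
  have hmain := mellin_cutoff_by_parts_and_decay_general hcutoff
  simp only [hderiv, smul_eq_mul] at hmain
  exact hmain.imp_right (.imp_right (.imp_right fun h N a b _ => h N a b))
end

section
/- Let ω be a cut-off function, p ∈ ℂ and k ∈ ℕ. The function z ↦ ∫_0^∞ r^{z−p−1} (log r)^k ω(r) dr (the Mellin transform of ω(r) r^{−p} log^k r) converges absolutely and is holomorphic on {Re z > Re p}, and there exists an entire function g such that it equals (−1)^k k! (z−p)^{−(k+1)} + g(z) on that half-plane. Hence it extends to a meromorphic function on ℂ whose only pole is at z = p, of order k+1. (This is the statement that the Mellin transform carries the singular functions of discrete asymptotics to meromorphic functions with a pole at p of multiplicity k+1.) -/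
open MeasureTheory Set

/-!
Multiplying `f` by `log` differentiates its Mellin transform, which reduces the powers of `log` to
the transform of `f` itself. If `f - v` is flat at `0⁺`, subtract from `f` the constant `v` on
`(0, 1]`, whose transform is `s⁻¹ • v`; differentiated `k` times, this gives
`((-1) ^ k * k! * (s ^ (k + 1))⁻¹) • v`. The remainder is flat at `0⁺` and decays faster than every
power at `∞`, so its transform is entire.
-/

open Filter Asymptotics Topology

theorem isBigO_cocompact_of_hasCompactSupport {X E F : Type*} [TopologicalSpace X] [R1Space X]
    [SeminormedAddCommGroup E] [Norm F] {f : X → E} (hf : HasCompactSupport f) (g : X → F) :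
    f =O[cocompact X] g := by
  rw [hasCompactSupport_iff_eventuallyEq, coclosedCompact_eq_cocompact] at hf
  exact hf.trans_isBigO (isBigO_zero g _)

variable {E : Type*} [NormedAddCommGroup E]

section LogPowers

variable [NormedSpace ℂ E] {f : ℝ → E} {a b : ℝ} {s : ℂ}

theorem locallyIntegrableOn_log_smul (hf : LocallyIntegrableOn f (Ioi 0)) :
    LocallyIntegrableOn (fun t => Real.log t • f t) (Ioi 0) :=
  hf.continuousOn_smul isOpen_Ioi.isLocallyClosed
    (Real.continuousOn_log.mono fun _ ht => ne_of_gt ht)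

theorem mellin_log_pow_smul_hasDerivAt_of_isBigO_rpow (hf : LocallyIntegrableOn f (Ioi 0))
    (hf_top : f =O[atTop] (· ^ (-a))) (hs_top : s.re < a)
    (hf_bot : f =O[𝓝[>] 0] (· ^ (-b))) (hs_bot : b < s.re) (k : ℕ) :
    MellinConvergent (fun t => Real.log t ^ k • f t) s ∧
      HasDerivAt (mellin fun t => Real.log t ^ k • f t)
        (mellin (fun t => Real.log t ^ (k + 1) • f t) s) s := by
  induction k generalizing f a b with
  | zero =>
    simpa using And.intro (mellinConvergent_of_isBigO_rpow hf hf_top hs_top hf_bot hs_bot)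
      (mellin_hasDerivAt_of_isBigO_rpow hf hf_top hs_top hf_bot hs_bot).2
  | succ k ih =>
    -- Each factor `log` costs an arbitrarily small part of the strip `b < re s < a`.
    obtain ⟨a', hsa', ha'⟩ := exists_between hs_top
    obtain ⟨b', hb', hbs'⟩ := exists_between hs_bot
    simpa only [smul_smul, ← pow_succ] using
      ih (locallyIntegrableOn_log_smul hf) (isBigO_rpow_top_log_smul ha' hf_top) hsa'
        (isBigO_rpow_zero_log_smul hb' hf_bot) hbs'

theorem iteratedDeriv_mellin_of_isBigO_rpow (hf : LocallyIntegrableOn f (Ioi 0))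
    (hf_top : f =O[atTop] (· ^ (-a))) (hs_top : s.re < a)
    (hf_bot : f =O[𝓝[>] 0] (· ^ (-b))) (hs_bot : b < s.re) (k : ℕ) :
    iteratedDeriv k (mellin f) s = mellin (fun t => Real.log t ^ k • f t) s := by
  induction k generalizing s with
  | zero => simp
  | succ k ih =>
    have ih_near : iteratedDeriv k (mellin f) =ᶠ[𝓝 s] mellin fun t => Real.log t ^ k • f t := by
      filter_upwards [Complex.continuous_re.continuousAt.eventually_lt_const hs_top,
        Complex.continuous_re.continuousAt.eventually_const_lt hs_bot] with z hz_top hz_bot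
      exact ih hz_top hz_bot
    rw [iteratedDeriv_succ, ih_near.deriv_eq]
    exact (mellin_log_pow_smul_hasDerivAt_of_isBigO_rpow hf hf_top hs_top hf_bot hs_bot k).2.deriv

end LogPowers

section IndicatorIoc

theorem locallyIntegrableOn_indicator_Ioc_const (v : E) (c d : ℝ) (s : Set ℝ) :
    LocallyIntegrableOn ((Ioc c d).indicator fun _ => v) s :=
  ((locallyIntegrable_const v).indicator measurableSet_Ioc).locallyIntegrableOn s

theorem indicator_Ioc_isBigO_atTop {F : Type*} [Norm F] (v : E) (c d : ℝ) (g : ℝ → F) :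
    (Ioc c d).indicator (fun _ => v) =O[atTop] g := by
  have hzero : (Ioc c d).indicator (fun _ => v) =ᶠ[atTop] 0 := by
    filter_upwards [eventually_gt_atTop d] with t ht
    exact indicator_of_notMem (fun h => h.2.not_gt ht) _
  exact hzero.trans_isBigO (isBigO_zero g _)

theorem indicator_Ioc_eventuallyEq_nhdsGT (v : E) {c d : ℝ} (hcd : c < d) :
    (Ioc c d).indicator (fun _ => v) =ᶠ[𝓝[>] c] fun _ => v := by
  filter_upwards [Ioc_mem_nhdsGT hcd] with t ht
  exact indicator_of_mem ht _

theorem indicator_const_isBigO_one {α : Type*} (l : Filter α) (s : Set α) (v : E) :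
    s.indicator (fun _ => v) =O[l] (fun _ => (1 : ℝ)) :=
  .of_bound ‖v‖ <| .of_forall fun t => by
    simpa using norm_indicator_le_norm_self (fun _ => v) t

variable [NormedSpace ℂ E]

theorem mellinConvergent_log_pow_smul_indicator_Ioc (v : E) {s : ℂ} (hs : 0 < s.re) (k : ℕ) :
    MellinConvergent (fun t => Real.log t ^ k • (Ioc 0 1).indicator (fun _ => v) t) s :=
  (mellin_log_pow_smul_hasDerivAt_of_isBigO_rpow
    (locallyIntegrableOn_indicator_Ioc_const v 0 1 _)
    (indicator_Ioc_isBigO_atTop v 0 1 _) (lt_add_one _)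
    (by simpa using indicator_const_isBigO_one (𝓝[>] 0) (Ioc 0 1) v) hs k).1

variable [CompleteSpace E]

theorem mellin_indicator_Ioc_const (v : E) {s : ℂ} (hs : 0 < s.re) :
    mellin ((Ioc 0 1).indicator fun _ => v) s = s⁻¹ • v := by
  rw [← one_div, ← (hasMellin_one_Ioc hs).2]
  simp only [mellin, ← integral_smul_const, smul_assoc, ← indicator_smul_const_apply, one_smul]

theorem mellin_log_pow_smul_indicator_Ioc (v : E) {s : ℂ} (hs : 0 < s.re) (k : ℕ) :
    mellin (fun t => Real.log t ^ k • (Ioc 0 1).indicator (fun _ => v) t) s =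
      ((-1) ^ k * (k.factorial : ℂ) * (s ^ (k + 1))⁻¹) • v := by
  have hmellin_near : mellin ((Ioc 0 1).indicator fun _ => v) =ᶠ[𝓝 s] fun z => z⁻¹ • v := by
    filter_upwards [Complex.continuous_re.continuousAt.eventually_const_lt hs] with z hz
    exact mellin_indicator_Ioc_const v hz
  have hexp : (-1 - k : ℤ) = -((k + 1 : ℕ) : ℤ) := by
    push_cast
    ring
  rw [← iteratedDeriv_mellin_of_isBigO_rpow (locallyIntegrableOn_indicator_Ioc_const v 0 1 _)
      (indicator_Ioc_isBigO_atTop v 0 1 _) (lt_add_one _)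
      (by simpa using indicator_const_isBigO_one (𝓝[>] 0) (Ioc 0 1) v) hs k,
    hmellin_near.iteratedDeriv_eq,
    iteratedDeriv_smul_const (contDiffAt_inv ℂ (Complex.ne_zero_of_re_pos hs)) v,
    iteratedDeriv_eq_iterate, iter_deriv_inv, hexp, zpow_neg, zpow_natCast]

end IndicatorIoc

section SingularPart

variable [NormedSpace ℂ E] {f : ℝ → E} {v : E} {a b : ℝ} {s : ℂ}

theorem mellin_log_pow_smul_sub_indicator_Ioc_hasDerivAt (hf : LocallyIntegrableOn f (Ioi 0))
    (hf_top : f =O[atTop] (· ^ (-a))) (hs_top : s.re < a)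
    (hf_bot : (fun t => f t - v) =O[𝓝[>] 0] (· ^ (-b))) (hs_bot : b < s.re) (k : ℕ) :
    MellinConvergent (fun t => Real.log t ^ k • (f t - (Ioc 0 1).indicator (fun _ => v) t)) s ∧
      HasDerivAt (mellin fun t => Real.log t ^ k • (f t - (Ioc 0 1).indicator (fun _ => v) t))
        (mellin (fun t => Real.log t ^ (k + 1) • (f t - (Ioc 0 1).indicator (fun _ => v) t)) s)
        s :=
  mellin_log_pow_smul_hasDerivAt_of_isBigO_rpow
    (hf.sub (locallyIntegrableOn_indicator_Ioc_const v 0 1 _))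
    (hf_top.sub (indicator_Ioc_isBigO_atTop v 0 1 _)) hs_top
    (((EventuallyEq.refl _ f).sub (indicator_Ioc_eventuallyEq_nhdsGT v one_pos)).trans_isBigO
      hf_bot) hs_bot k

theorem hasMellin_log_pow_smul_of_isBigO_sub [CompleteSpace E]
    (hf : LocallyIntegrableOn f (Ioi 0)) (hf_top : f =O[atTop] (· ^ (-a))) (hs_top : s.re < a)
    (hf_bot : (fun t => f t - v) =O[𝓝[>] 0] (· ^ (-b))) (hs_bot : b < s.re) (hs : 0 < s.re)
    (k : ℕ) :
    HasMellin (fun t => Real.log t ^ k • f t) s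
      (((-1) ^ k * (k.factorial : ℂ) * (s ^ (k + 1))⁻¹) • v +
        mellin (fun t => Real.log t ^ k • (f t - (Ioc 0 1).indicator (fun _ => v) t)) s) := by
  rw [← mellin_log_pow_smul_indicator_Ioc v hs k]
  simpa only [← smul_add, add_sub_cancel] using
    hasMellin_add (mellinConvergent_log_pow_smul_indicator_Ioc v hs k)
      (mellin_log_pow_smul_sub_indicator_Ioc_hasDerivAt hf hf_top hs_top hf_bot hs_bot k).1

end SingularPart

theorem mellin_of_singular_function_pole_general [NormedSpace ℂ E] [CompleteSpace E]
    {f : ℝ → E} {v : E} (hf : LocallyIntegrableOn f (Ioi 0))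
    (hf_top : ∀ a : ℝ, f =O[atTop] (· ^ (-a)))
    (hf_bot : ∀ b : ℝ, (fun t => f t - v) =O[𝓝[>] 0] (· ^ (-b))) (p : ℂ) (k : ℕ) :
    (∀ z : ℂ, p.re < z.re → MellinConvergent (fun t => Real.log t ^ k • f t) (z - p)) ∧
      DifferentiableOn ℂ (fun z => mellin (fun t => Real.log t ^ k • f t) (z - p))
        {z : ℂ | p.re < z.re} ∧
      ∃ g : ℂ → E, Differentiable ℂ g ∧ ∀ z : ℂ, p.re < z.re →
        mellin (fun t => Real.log t ^ k • f t) (z - p) =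
          ((-1) ^ k * (k.factorial : ℂ) * ((z - p) ^ (k + 1))⁻¹) • v + g z := by
  have hre {z : ℂ} (hz : p.re < z.re) : 0 < (z - p).re := by simpa using hz
  have hdecomp (z : ℂ) (hz : p.re < z.re) := hasMellin_log_pow_smul_of_isBigO_sub hf
    (hf_top _) (lt_add_one _) (hf_bot _) (sub_one_lt _) (hre hz) k
  have hg : Differentiable ℂ fun z =>
      mellin (fun t => Real.log t ^ k • (f t - (Ioc 0 1).indicator (fun _ => v) t)) (z - p) :=
    fun z => (mellin_log_pow_smul_sub_indicator_Ioc_hasDerivAt hf (hf_top _) (lt_add_one _)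
      (hf_bot _) (sub_one_lt _) k).2.differentiableAt.comp z (differentiableAt_id.sub_const p)
  have hpole : DifferentiableOn ℂ
      (fun z => ((-1) ^ k * (k.factorial : ℂ) * ((z - p) ^ (k + 1))⁻¹) • v)
      {z : ℂ | p.re < z.re} := by
    have hne : ∀ z ∈ {z : ℂ | p.re < z.re}, (z - p) ^ (k + 1) ≠ 0 := fun z hz =>
      pow_ne_zero _ (Complex.ne_zero_of_re_pos (hre hz))
    fun_prop (disch := assumption)
  exact ⟨fun z hz => (hdecomp z hz).1,
    (hpole.add hg.differentiableOn).congr fun z hz => (hdecomp z hz).2,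
    _, hg, fun z hz => (hdecomp z hz).2⟩

/-- The Mellin transform carries the singular functions of discrete asymptotics
to meromorphic functions: for a cut-off function `ω`, `p ∈ ℂ` and `k ∈ ℕ`, the
function `z ↦ ∫_0^∞ r^{z-p-1} (log r)^k ω(r) dr` converges absolutely and is
holomorphic on `{Re z > Re p}`, and it equals
`(-1)^k k! (z-p)^{-(k+1)}` plus an entire function there; hence it extends
meromorphically to `ℂ` with a single pole at `z = p` of order `k+1`. -/
theorem mellin_of_singular_function_pole
    (ω : ℝ → ℝ) (hω : ContDiff ℝ (⊤ : ℕ∞) ω) (hcs : HasCompactSupport ω)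
    (hone : ∀ᶠ r in nhds (0 : ℝ), ω r = 1) (p : ℂ) (k : ℕ) :
    (∀ z : ℂ, p.re < z.re →
        IntegrableOn
          (fun r : ℝ => (r : ℂ) ^ (z - p - 1) * ((Real.log r : ℝ) : ℂ) ^ k * (ω r : ℂ))
          (Ioi 0)) ∧
      DifferentiableOn ℂ
        (fun z : ℂ => ∫ r in Ioi (0 : ℝ),
          (r : ℂ) ^ (z - p - 1) * ((Real.log r : ℝ) : ℂ) ^ k * (ω r : ℂ))
        {z : ℂ | p.re < z.re} ∧
      ∃ g : ℂ → ℂ, Differentiable ℂ g ∧ ∀ z : ℂ, p.re < z.re →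
        (∫ r in Ioi (0 : ℝ),
            (r : ℂ) ^ (z - p - 1) * ((Real.log r : ℝ) : ℂ) ^ k * (ω r : ℂ))
          = (-1) ^ k * (k.factorial : ℂ) * ((z - p) ^ (k + 1))⁻¹ + g z := by
  have hω_int : LocallyIntegrableOn (fun r => (ω r : ℂ)) (Ioi 0) :=
    (Complex.continuous_ofReal.comp hω.continuous).locallyIntegrable.locallyIntegrableOn _
  have hω_top (a : ℝ) : (fun r => (ω r : ℂ)) =O[atTop] (· ^ (-a)) :=
    (isBigO_cocompact_of_hasCompactSupport (hcs.comp_left Complex.ofReal_zero) _).mono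
      atTop_le_cocompact
  have hω_bot : (fun r => (ω r : ℂ) - 1) =ᶠ[𝓝[>] 0] 0 :=
    (hone.filter_mono nhdsWithin_le_nhds).mono fun r hr => by simp [hr]
  simpa [MellinConvergent, mellin, mul_assoc] using mellin_of_singular_function_pole_general
    hω_int hω_top (fun b => hω_bot.trans_isBigO (isBigO_zero _ _)) p k
end

section
/- Let U ⊆ ℝ^p be open, H, H̃ complex Hilbert spaces with group actions κ, κ̃, μ ∈ ℝ, C > 0, and let a ∈ C^∞(U×ℝ^q, L(H,H̃)) satisfy the twisted homogeneity relation a(y,λη) = λ^μ κ̃_λ ∘ a(y,η) ∘ κ_λ^{−1} for all y ∈ U, all η with |η| ≥ C, and all λ ≥ 1. Then a satisfies the symbol estimates of order μ with respect to (κ,κ̃): for all multi-indices α, β and every compact K ⊂ U there is c > 0 with ‖κ̃_{⟨η⟩}^{−1} (∂_y^α ∂_η^β a)(y,η) κ_{⟨η⟩}‖ ≤ c ⟨η⟩^{μ−|β|} on K×ℝ^q. -/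
open Set

/-- The "japanese bracket" `⟨η⟩ = (1+|η|²)^{1/2}` for `η ∈ ℝ^q`. -/
noncomputable def jap {q : ℕ} (η : Fin q → ℝ) : ℝ :=
  Real.sqrt (1 + ∑ j, η j ^ 2)

/-- Partial derivative `∂_{y_i}` in the first group of variables of a function on
`ℝ^p × ℝ^q`. -/
noncomputable def pdY {p q : ℕ} {E : Type*} [NormedAddCommGroup E] [NormedSpace ℝ E]
    (i : Fin p) (f : (Fin p → ℝ) × (Fin q → ℝ) → E) :
    (Fin p → ℝ) × (Fin q → ℝ) → E :=
  fun x => fderiv ℝ f x (Pi.single i 1, 0)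

/-- Partial derivative `∂_{η_j}` in the second group of variables. -/
noncomputable def pdEta {p q : ℕ} {E : Type*} [NormedAddCommGroup E] [NormedSpace ℝ E]
    (j : Fin q) (f : (Fin p → ℝ) × (Fin q → ℝ) → E) :
    (Fin p → ℝ) × (Fin q → ℝ) → E :=
  fun x => fderiv ℝ f x (0, Pi.single j 1)

/-- The mixed partial derivative `∂_y^α ∂_η^β`, where the multi-indices `α, β`
are encoded as lists of coordinate directions. -/
noncomputable def mderiv {p q : ℕ} {E : Type*} [NormedAddCommGroup E] [NormedSpace ℝ E]
    (α : List (Fin p)) (β : List (Fin q))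
    (f : (Fin p → ℝ) × (Fin q → ℝ) → E) :
    (Fin p → ℝ) × (Fin q → ℝ) → E :=
  α.foldr pdY (β.foldr pdEta f)

/-- A group action on a complex normed space. -/
structure IsGroupAction {H : Type*} [NormedAddCommGroup H] [NormedSpace ℂ H]
    (κ : ℝ → H →L[ℂ] H) : Prop where
  inv : ∀ l : ℝ, 0 < l → Function.Bijective (κ l)
  one : κ 1 = ContinuousLinearMap.id ℂ H
  mul : ∀ l l' : ℝ, 0 < l → 0 < l' → (κ l).comp (κ l') = κ (l * l')
  cont : ∀ h : H, ContinuousOn (fun l : ℝ => κ l h) (Ioi 0)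

/-- The operator-valued symbol estimates of order `μ` with respect to the pair of
group actions `(κ, κ')`:
`‖κ'_{⟨η⟩}^{-1} (∂_y^α ∂_η^β a)(y,η) κ_{⟨η⟩}‖ ≤ c ⟨η⟩^{μ-|β|}` on `K × ℝ^q` for
every compact `K ⊂ U`. -/
def SymbolEst {p q : ℕ} {H H' : Type*}
    [NormedAddCommGroup H] [NormedSpace ℂ H]
    [NormedAddCommGroup H'] [NormedSpace ℂ H']
    (μ : ℝ) (κ : ℝ → H →L[ℂ] H) (κ' : ℝ → H' →L[ℂ] H')
    (U : Set (Fin p → ℝ))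
    (a : (Fin p → ℝ) × (Fin q → ℝ) → (H →L[ℂ] H')) : Prop :=
  ∀ (α : List (Fin p)) (β : List (Fin q)) (K : Set (Fin p → ℝ)),
    K ⊆ U → IsCompact K → ∃ c : ℝ, 0 < c ∧
      ∀ y ∈ K, ∀ η : Fin q → ℝ,
        ‖(κ' (jap η)⁻¹).comp ((mderiv α β a (y, η)).comp (κ (jap η)))‖
          ≤ c * jap η ^ (μ - (β.length : ℝ))


/-!
Conjugation `b ↦ κ̃_l ∘ b ∘ κ_l⁻¹` turns the two group actions into a single one-parameter group
`T` on `L(H, H̃)`, locally bounded by the uniform boundedness principle. The relation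
`f(y, lη) = l^ν T_l f(y, η)` is inherited by the `y`-derivatives of `f` and, with `ν - 1` in place
of `ν`, by its `η`-derivatives; so it suffices to bound `⟨η⟩^{-ν} T_{⟨η⟩}⁻¹ f(y, η)` for `y` in a
compact set. Writing `η = lξ` with `ξ` in a fixed ball and `s = l/⟨η⟩` in a fixed compact subset
of `(0, ∞)`, this quantity equals `s^ν T_s f(y, ξ)`, which is bounded by compactness.
-/

section TwistedHomogeneity

variable {Y V E : Type*} [NormedAddCommGroup E] [NormedSpace ℝ E]
  {T : ℝ → E →L[ℝ] E} {ν : ℝ} {Ω : Set (Y × V)} {f : Y × V → E}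

/-- Homogeneity of degree `ν` in the second variable, twisted by the operators `T l`. Only points
of `Ω` and dilations `l ≥ 1` are considered, and `Ω` need not be stable under these dilations. -/
def IsTwistedHomogeneousOn [SMul ℝ V] (T : ℝ → E →L[ℝ] E) (ν : ℝ) (Ω : Set (Y × V))
    (f : Y × V → E) : Prop :=
  ∀ x ∈ Ω, ∀ l : ℝ, 1 ≤ l → f (x.1, l • x.2) = l ^ ν • T l (f x)

lemma IsTwistedHomogeneousOn.mono [SMul ℝ V] {Ω' : Set (Y × V)}
    (h : IsTwistedHomogeneousOn T ν Ω f) (hΩ : Ω' ⊆ Ω) : IsTwistedHomogeneousOn T ν Ω' f :=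
  fun x hx => h x (hΩ hx)

variable [NormedAddCommGroup Y] [NormedSpace ℝ Y] [NormedAddCommGroup V] [NormedSpace ℝ V]

lemma IsTwistedHomogeneousOn.fderiv_apply (h : IsTwistedHomogeneousOn T ν Ω f) (hΩ : IsOpen Ω)
    {x : Y × V} (hx : x ∈ Ω) (hf : DifferentiableAt ℝ f x) {l : ℝ} (hl : 1 ≤ l) (v : Y × V) :
    fderiv ℝ f (x.1, l • x.2) (v.1, l • v.2) = l ^ ν • T l (fderiv ℝ f x v) := by
  have hl0 : l ≠ 0 := (zero_lt_one.trans_le hl).ne'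
  let dil : (Y × V) ≃L[ℝ] Y × V :=
    (ContinuousLinearEquiv.refl ℝ Y).prodCongr
      (ContinuousLinearEquiv.smulLeft (Units.mk0 l hl0))
  have hleft : fderiv ℝ (f ∘ dil) x = (fderiv ℝ f (dil x)).comp (dil : Y × V →L[ℝ] Y × V) :=
    dil.comp_right_fderiv
  have hright : fderiv ℝ ((l ^ ν • T l) ∘ f) x = (l ^ ν • T l).comp (fderiv ℝ f x) :=
    ((l ^ ν • T l).hasFDerivAt.comp x hf.hasFDerivAt).fderiv
  have heq : f ∘ dil =ᶠ[nhds x] (l ^ ν • T l) ∘ f := by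
    filter_upwards [hΩ.mem_nhds hx] with z hz using h z hz l hl
  exact DFunLike.congr_fun (hleft.symm.trans (heq.fderiv_eq.trans hright)) v

lemma IsTwistedHomogeneousOn.fderiv_fst (h : IsTwistedHomogeneousOn T ν Ω f) (hΩ : IsOpen Ω)
    (hf : DifferentiableOn ℝ f Ω) (u : Y) :
    IsTwistedHomogeneousOn T ν Ω fun x => fderiv ℝ f x (u, 0) := by
  intro x hx l hl
  simpa only [smul_zero] using
    h.fderiv_apply hΩ hx (hf.differentiableAt (hΩ.mem_nhds hx)) hl (u, 0)

lemma IsTwistedHomogeneousOn.fderiv_snd (h : IsTwistedHomogeneousOn T ν Ω f) (hΩ : IsOpen Ω)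
    (hf : DifferentiableOn ℝ f Ω) (w : V) :
    IsTwistedHomogeneousOn T (ν - 1) Ω fun x => fderiv ℝ f x (0, w) := by
  intro x hx l hl
  have hl0 : l ≠ 0 := (zero_lt_one.trans_le hl).ne'
  have hw : ((0 : Y), l • w) = l • ((0 : Y), w) := by rw [Prod.smul_mk, smul_zero]
  have hderiv := h.fderiv_apply hΩ hx (hf.differentiableAt (hΩ.mem_nhds hx)) hl (0, w)
  rw [hw, map_smul] at hderiv
  rw [Real.rpow_sub_one hl0, div_eq_inv_mul, mul_smul]
  exact (eq_inv_smul_iff₀ hl0).2 hderiv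

end TwistedHomogeneity

section MixedDerivatives

variable {p q : ℕ} {E : Type*} [NormedAddCommGroup E] [NormedSpace ℝ E]
  {Ω : Set ((Fin p → ℝ) × (Fin q → ℝ))} {f : (Fin p → ℝ) × (Fin q → ℝ) → E}

lemma contDiffOn_mderiv (hΩ : IsOpen Ω) (hf : ContDiffOn ℝ (⊤ : ℕ∞) f Ω)
    (α : List (Fin p)) (β : List (Fin q)) : ContDiffOn ℝ (⊤ : ℕ∞) (mderiv α β f) Ω := by
  have fderiv_const {g : (Fin p → ℝ) × (Fin q → ℝ) → E} (hg : ContDiffOn ℝ (⊤ : ℕ∞) g Ω)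
      (v : (Fin p → ℝ) × (Fin q → ℝ)) :
      ContDiffOn ℝ (⊤ : ℕ∞) (fun x => fderiv ℝ g x v) Ω :=
    (hg.fderiv_of_isOpen hΩ le_rfl).clm_apply contDiffOn_const
  induction α with
  | nil =>
    induction β with
    | nil => exact hf
    | cons j β ih => exact fderiv_const ih _
  | cons i α ih => exact fderiv_const ih _

lemma IsTwistedHomogeneousOn.mderiv {T : ℝ → E →L[ℝ] E} {ν : ℝ}
    (h : IsTwistedHomogeneousOn T ν Ω f) (hΩ : IsOpen Ω) (hf : ContDiffOn ℝ (⊤ : ℕ∞) f Ω)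
    (α : List (Fin p)) (β : List (Fin q)) :
    IsTwistedHomogeneousOn T (ν - β.length) Ω (mderiv α β f) := by
  have hdiff (α : List (Fin p)) (β : List (Fin q)) :
      DifferentiableOn ℝ (_root_.mderiv α β f) Ω :=
    (contDiffOn_mderiv hΩ hf α β).differentiableOn (by simp)
  induction α with
  | nil =>
    induction β with
    | nil =>
      rw [List.length_nil, Nat.cast_zero, sub_zero]
      exact h
    | cons j β ih =>
      rw [List.length_cons, Nat.cast_succ, ← sub_sub]
      exact ih.fderiv_snd hΩ (hdiff [] β) _
  | cons i α ih => exact ih.fderiv_fst hΩ (hdiff α β) _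

end MixedDerivatives

section JapaneseBracket

variable {q : ℕ}

/-- The Euclidean length `|η|`; the norm that Mathlib puts on `Fin q → ℝ` is the sup norm. -/
noncomputable def euclNorm (η : Fin q → ℝ) : ℝ :=
  Real.sqrt (∑ j, η j ^ 2)

lemma euclNorm_eq_norm_toLp (η : Fin q → ℝ) : euclNorm η = ‖WithLp.toLp 2 η‖ := by
  simp only [euclNorm, EuclideanSpace.norm_eq, Real.norm_eq_abs, sq_abs]

lemma continuous_euclNorm : Continuous (euclNorm : (Fin q → ℝ) → ℝ) := by
  unfold euclNorm
  fun_prop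

lemma euclNorm_smul (l : ℝ) (η : Fin q → ℝ) : euclNorm (l • η) = |l| * euclNorm η := by
  simp only [euclNorm_eq_norm_toLp, WithLp.toLp_smul, norm_smul, Real.norm_eq_abs]

lemma isCompact_setOf_euclNorm_le (R : ℝ) : IsCompact {η : Fin q → ℝ | euclNorm η ≤ R} := by
  have hball : {η : Fin q → ℝ | euclNorm η ≤ R} =
      (EuclideanSpace.equiv (Fin q) ℝ).symm ⁻¹' Metric.closedBall 0 R := by
    ext η
    simp [euclNorm_eq_norm_toLp]
  rw [hball]
  exact (EuclideanSpace.equiv (Fin q) ℝ).symm.toHomeomorph.isCompact_preimage.2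
    (isCompact_closedBall 0 R)

lemma jap_eq_sqrt_one_add_euclNorm_sq (η : Fin q → ℝ) :
    jap η = Real.sqrt (1 + euclNorm η ^ 2) := by
  rw [jap, euclNorm, Real.sq_sqrt (Finset.sum_nonneg fun _ _ => sq_nonneg _)]

lemma one_le_jap (η : Fin q → ℝ) : 1 ≤ jap η := by
  rw [jap_eq_sqrt_one_add_euclNorm_sq, Real.one_le_sqrt]
  exact le_add_of_nonneg_right (sq_nonneg _)

lemma jap_pos (η : Fin q → ℝ) : 0 < jap η :=
  zero_lt_one.trans_le (one_le_jap η)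

lemma euclNorm_le_jap (η : Fin q → ℝ) : euclNorm η ≤ jap η := by
  rw [jap_eq_sqrt_one_add_euclNorm_sq]
  exact Real.le_sqrt_of_sq_le (le_add_of_nonneg_left zero_le_one)

lemma jap_le_one_add_euclNorm (η : Fin q → ℝ) : jap η ≤ 1 + euclNorm η := by
  rw [jap_eq_sqrt_one_add_euclNorm_sq, euclNorm_eq_norm_toLp]
  exact sqrt_one_add_norm_sq_le _

lemma exists_eq_smul_euclNorm_le {R : ℝ} (hR : 0 < R) (η : Fin q → ℝ) :
    ∃ (l : ℝ) (ξ : Fin q → ℝ), 1 ≤ l ∧ η = l • ξ ∧ euclNorm ξ ≤ R ∧ (l = 1 ∨ euclNorm ξ = R) := by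
  rcases le_total (euclNorm η) R with hη | hη
  · exact ⟨1, η, le_rfl, (one_smul ℝ η).symm, hη, Or.inl rfl⟩
  · have hη0 : 0 < euclNorm η := hR.trans_le hη
    have hl0 : 0 < euclNorm η / R := div_pos hη0 hR
    have hξ : euclNorm ((euclNorm η / R)⁻¹ • η) = R := by
      rw [euclNorm_smul, abs_of_pos (inv_pos.2 hl0), inv_div, div_mul_cancel₀ _ hη0.ne']
    exact ⟨euclNorm η / R, (euclNorm η / R)⁻¹ • η, (one_le_div hR).2 hη,
      (smul_inv_smul₀ hl0.ne' η).symm, hξ.le, Or.inr hξ⟩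

lemma div_jap_smul_mem_Icc {R l : ℝ} {ξ : Fin q → ℝ} (hR : 1 ≤ R) (hl : 1 ≤ l)
    (hξ : euclNorm ξ ≤ R) (hlξ : l = 1 ∨ euclNorm ξ = R) :
    l / jap (l • ξ) ∈ Icc (1 + R)⁻¹ 1 := by
  have hl0 : 0 < l := zero_lt_one.trans_le hl
  have hnorm : euclNorm (l • ξ) = l * euclNorm ξ := by rw [euclNorm_smul, abs_of_pos hl0]
  constructor
  · rw [inv_eq_one_div, div_le_div_iff₀ (by positivity) (jap_pos _)]
    calc 1 * jap (l • ξ) ≤ 1 + l * euclNorm ξ := by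
          rw [one_mul, ← hnorm]; exact jap_le_one_add_euclNorm _
      _ ≤ l + l * R := by gcongr
      _ = l * (1 + R) := by ring
  · rw [div_le_one (jap_pos _)]
    rcases hlξ with rfl | hξR
    · exact one_le_jap _
    · calc l ≤ l * R := le_mul_of_one_le_right hl0.le hR
        _ = euclNorm (l • ξ) := by rw [hnorm, hξR]
        _ ≤ jap (l • ξ) := euclNorm_le_jap _

end JapaneseBracket

section SymbolEstimate

variable {E : Type*} [NormedAddCommGroup E] [NormedSpace ℝ E] {T : ℝ → E →L[ℝ] E}

/-- A multiplicative one-parameter group `T l`, `l > 0`, of operators that is locally bounded in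
operator norm. Strong continuity is not demanded, because conjugating operators by strongly
continuous groups need not give a strongly continuous group. Values at `l ≤ 0` are junk. -/
structure IsLocallyBoundedGroup (T : ℝ → E →L[ℝ] E) : Prop where
  one : T 1 = ContinuousLinearMap.id ℝ E
  mul : ∀ l l' : ℝ, 0 < l → 0 < l' → (T l).comp (T l') = T (l * l')
  isBounded_image : ∀ J : Set ℝ, IsCompact J → J ⊆ Ioi 0 → Bornology.IsBounded (T '' J)

lemma IsLocallyBoundedGroup.apply_inv_rpow_smul (hT : IsLocallyBoundedGroup T) {l t : ℝ}
    (hl : 0 < l) (ht : 0 < t) (ν : ℝ) (e : E) :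
    T t⁻¹ (l ^ ν • T l e) = t ^ ν • (l / t) ^ ν • T (l / t) e := by
  have hlt : l ^ ν = t ^ ν * (l / t) ^ ν := by
    rw [← Real.mul_rpow ht.le (div_pos hl ht).le, mul_div_cancel₀ _ ht.ne']
  have hTlt : T (l / t) e = T t⁻¹ (T l e) := by
    rw [div_eq_inv_mul, ← hT.mul _ _ (inv_pos.2 ht) hl, ContinuousLinearMap.comp_apply]
  rw [map_smul, hTlt, hlt, mul_smul]

lemma exists_norm_rpow_smul_apply_le {X : Type*} [TopologicalSpace X] {J : Set ℝ}
    (hJ : IsCompact J) (hJ0 : J ⊆ Ioi 0) (hT : Bornology.IsBounded (T '' J))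
    {L : Set X} (hL : IsCompact L) {f : X → E} (hf : ContinuousOn f L) (ν : ℝ) :
    ∃ c : ℝ, 0 < c ∧ ∀ s ∈ J, ∀ x ∈ L, ‖s ^ ν • T s (f x)‖ ≤ c := by
  have hpow : ContinuousOn (fun s : ℝ => s ^ ν) J :=
    continuousOn_id.rpow_const fun s hs => Or.inl (hJ0 hs).ne'
  obtain ⟨D, hD0, hD⟩ := (hJ.image_of_continuousOn hpow).isBounded.exists_pos_norm_le
  obtain ⟨M, hM0, hM⟩ := hT.exists_pos_norm_le
  obtain ⟨B, hB0, hB⟩ := (hL.image_of_continuousOn hf).isBounded.exists_pos_norm_le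
  refine ⟨D * (M * B), by positivity, fun s hs x hx => ?_⟩
  rw [norm_smul]
  gcongr
  · exact hD _ (mem_image_of_mem _ hs)
  · exact (T s).le_of_opNorm_le_of_le (hM _ (mem_image_of_mem _ hs)) (hB _ (mem_image_of_mem _ hx))

lemma IsTwistedHomogeneousOn.exists_norm_apply_inv_jap_le {Y : Type*} [TopologicalSpace Y] {q : ℕ}
    {ν C : ℝ} {K : Set Y} {f : Y × (Fin q → ℝ) → E}
    (h : IsTwistedHomogeneousOn T ν (K ×ˢ {η | C < euclNorm η}) f)
    (hT : IsLocallyBoundedGroup T) (hK : IsCompact K) (hf : ContinuousOn f (K ×ˢ univ)) :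
    ∃ c : ℝ, 0 < c ∧ ∀ y ∈ K, ∀ η, ‖T (jap η)⁻¹ (f (y, η))‖ ≤ c * jap η ^ ν := by
  set R : ℝ := |C| + 1
  have hR1 : 1 ≤ R := le_add_of_nonneg_left (abs_nonneg C)
  have hCR : C < R := (le_abs_self C).trans_lt (lt_add_one _)
  have hJ0 : Icc (1 + R)⁻¹ 1 ⊆ Ioi 0 := fun s hs => lt_of_lt_of_le (by positivity) hs.1
  obtain ⟨c, hc0, hc⟩ := exists_norm_rpow_smul_apply_le isCompact_Icc hJ0
    (hT.isBounded_image _ isCompact_Icc hJ0) (hK.prod (isCompact_setOf_euclNorm_le R))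
    (hf.mono (prod_mono_right (subset_univ _))) ν
  refine ⟨c, hc0, fun y hy η => ?_⟩
  obtain ⟨l, ξ, hl, rfl, hξ, hlξ⟩ := exists_eq_smul_euclNorm_le (zero_lt_one.trans_le hR1) η
  have hscale : f (y, l • ξ) = l ^ ν • T l (f (y, ξ)) := by
    rcases hlξ with rfl | hξR
    · rw [hT.one, Real.one_rpow, one_smul, one_smul, ContinuousLinearMap.id_apply]
    · exact h (y, ξ) ⟨hy, hCR.trans_eq hξR.symm⟩ l hl
  have hjap : 0 ≤ jap (l • ξ) ^ ν := Real.rpow_nonneg (jap_pos _).le ν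
  rw [hscale, hT.apply_inv_rpow_smul (zero_lt_one.trans_le hl) (jap_pos _), norm_smul,
    Real.norm_of_nonneg hjap, mul_comm]
  gcongr
  exact hc _ (div_jap_smul_mem_Icc hR1 hl hξ hlξ) (y, ξ) ⟨hy, hξ⟩

end SymbolEstimate

section Conjugation

variable {H H' : Type*} [NormedAddCommGroup H] [NormedSpace ℂ H]
  [NormedAddCommGroup H'] [NormedSpace ℂ H'] {κ : ℝ → H →L[ℂ] H} {κ' : ℝ → H' →L[ℂ] H'}

lemma IsGroupAction.isBounded_image [CompleteSpace H] (hκ : IsGroupAction κ) {J : Set ℝ}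
    (hJ : IsCompact J) (hJ0 : J ⊆ Ioi 0) : Bornology.IsBounded (κ '' J) := by
  obtain ⟨A, hA⟩ := banach_steinhaus (g := fun t : J => κ t) fun h => by
    obtain ⟨c, hc⟩ := hJ.exists_bound_of_continuousOn ((hκ.cont h).mono hJ0)
    exact ⟨c, fun t => hc t t.2⟩
  exact isBounded_iff_forall_norm_le.2 ⟨A, forall_mem_image.2 fun t ht => hA ⟨t, ht⟩⟩

/-- The conjugation `b ↦ κ'_l ∘ b ∘ κ_l⁻¹` occurring in twisted homogeneity, with `κ_l⁻¹` encoded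
as `κ l⁻¹`. It is viewed as a real-linear operator because symbols are differentiated in real
variables. -/
noncomputable def conjOperator (κ : ℝ → H →L[ℂ] H) (κ' : ℝ → H' →L[ℂ] H') (l : ℝ) :
    (H →L[ℂ] H') →L[ℝ] (H →L[ℂ] H') :=
  ((ContinuousLinearMap.compL ℂ H H' H' (κ' l)).comp
    ((ContinuousLinearMap.compL ℂ H H H').flip (κ l⁻¹))).restrictScalars ℝ

lemma conjOperator_apply (l : ℝ) (b : H →L[ℂ] H') :
    conjOperator κ κ' l b = (κ' l).comp (b.comp (κ l⁻¹)) :=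
  rfl

lemma norm_conjOperator_le (l : ℝ) : ‖conjOperator κ κ' l‖ ≤ ‖κ' l‖ * ‖κ l⁻¹‖ := by
  refine ContinuousLinearMap.opNorm_le_bound _ (by positivity) fun b => ?_
  calc ‖(κ' l).comp (b.comp (κ l⁻¹))‖ ≤ ‖κ' l‖ * ‖b.comp (κ l⁻¹)‖ :=
        ContinuousLinearMap.opNorm_comp_le _ _
    _ ≤ ‖κ' l‖ * (‖b‖ * ‖κ l⁻¹‖) := by gcongr; exact ContinuousLinearMap.opNorm_comp_le _ _
    _ = ‖κ' l‖ * ‖κ l⁻¹‖ * ‖b‖ := by ring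

lemma isLocallyBoundedGroup_conjOperator [CompleteSpace H] [CompleteSpace H']
    (hκ : IsGroupAction κ) (hκ' : IsGroupAction κ') :
    IsLocallyBoundedGroup (conjOperator κ κ') where
  one := by
    ext b
    simp only [conjOperator_apply, inv_one, hκ.one, hκ'.one, ContinuousLinearMap.id_comp,
      ContinuousLinearMap.comp_id, ContinuousLinearMap.id_apply]
  mul l l' hl hl' := by
    ext b
    simp only [ContinuousLinearMap.comp_apply, conjOperator_apply, mul_inv_rev,
      ← hκ'.mul l l' hl hl', ← hκ.mul l'⁻¹ l⁻¹ (inv_pos.2 hl') (inv_pos.2 hl)]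
  isBounded_image J hJ hJ0 := by
    have hJinv : IsCompact (Inv.inv '' J) :=
      hJ.image_of_continuousOn (continuousOn_id.inv₀ fun t ht => (hJ0 ht).ne')
    have hJinv0 : Inv.inv '' J ⊆ Ioi 0 := by
      rintro _ ⟨t, ht, rfl⟩
      exact inv_pos_of_pos (mem_Ioi.1 (hJ0 ht))
    obtain ⟨A, _, hA⟩ := (hκ.isBounded_image hJinv hJinv0).exists_pos_norm_le
    obtain ⟨A', hA'0, hA'⟩ := (hκ'.isBounded_image hJ hJ0).exists_pos_norm_le
    refine isBounded_iff_forall_norm_le.2 ⟨A' * A, forall_mem_image.2 fun t ht => ?_⟩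
    refine (norm_conjOperator_le t).trans ?_
    gcongr
    · exact hA' _ (mem_image_of_mem _ ht)
    · exact hA _ (mem_image_of_mem _ (mem_image_of_mem _ ht))

end Conjugation

theorem twisted_homogeneous_satisfies_symbolEst_general
    {p q : ℕ} {H H' : Type*}
    [NormedAddCommGroup H] [NormedSpace ℂ H] [CompleteSpace H]
    [NormedAddCommGroup H'] [NormedSpace ℂ H'] [CompleteSpace H']
    (κ : ℝ → H →L[ℂ] H) (κ' : ℝ → H' →L[ℂ] H')
    (hκ : IsGroupAction κ) (hκ' : IsGroupAction κ')
    (μ : ℝ) (C : ℝ) (U : Set (Fin p → ℝ)) (hU : IsOpen U)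
    (a : (Fin p → ℝ) × (Fin q → ℝ) → (H →L[ℂ] H'))
    (ha : ContDiffOn ℝ (⊤ : ℕ∞) a (U ×ˢ (univ : Set (Fin q → ℝ))))
    (hhom : ∀ y ∈ U, ∀ η : Fin q → ℝ, C ≤ Real.sqrt (∑ j, η j ^ 2) →
      ∀ l : ℝ, 1 ≤ l →
        a (y, l • η) = ((l ^ μ : ℝ) : ℂ) • (κ' l).comp ((a (y, η)).comp (κ l⁻¹))) :
    SymbolEst μ κ κ' U a := by
  intro α β K hKU hK
  have hΩ : IsOpen (U ×ˢ {η : Fin q → ℝ | C < euclNorm η}) :=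
    hU.prod (isOpen_lt continuous_const continuous_euclNorm)
  have ha_hom : IsTwistedHomogeneousOn (conjOperator κ κ') μ
      (U ×ˢ {η : Fin q → ℝ | C < euclNorm η}) a := by
    rintro ⟨y, η⟩ ⟨hy, hη⟩ l hl
    rw [hhom y hy η hη.le l hl, conjOperator_apply, Complex.coe_smul]
  have hderiv_hom := (ha_hom.mderiv hΩ (ha.mono (prod_mono_right (subset_univ _))) α β).mono
    (prod_mono_left hKU)
  have hderiv_cont := (contDiffOn_mderiv (hU.prod isOpen_univ) ha α β).continuousOn.mono
    (prod_mono_left hKU)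
  obtain ⟨c, hc0, hc⟩ := hderiv_hom.exists_norm_apply_inv_jap_le
    (isLocallyBoundedGroup_conjOperator hκ hκ') hK hderiv_cont
  refine ⟨c, hc0, fun y hy η => ?_⟩
  simpa only [conjOperator_apply, inv_inv] using hc y hy η

/-- A function `a ∈ C^∞(U×ℝ^q, L(H,H̃))` which is twisted homogeneous of order
`μ` for large `|η|`, i.e. `a(y,λη) = λ^μ κ̃_λ a(y,η) κ_λ^{-1}` for `|η| ≥ C` and
`λ ≥ 1`, satisfies the symbol estimates of order `μ` with respect to `(κ, κ̃)`. -/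
theorem twisted_homogeneous_satisfies_symbolEst
    {p q : ℕ} {H H' : Type*}
    [NormedAddCommGroup H] [InnerProductSpace ℂ H] [CompleteSpace H]
    [NormedAddCommGroup H'] [InnerProductSpace ℂ H'] [CompleteSpace H']
    (κ : ℝ → H →L[ℂ] H) (κ' : ℝ → H' →L[ℂ] H')
    (hκ : IsGroupAction κ) (hκ' : IsGroupAction κ')
    (μ : ℝ) (C : ℝ) (hC : 0 < C)
    (U : Set (Fin p → ℝ)) (hU : IsOpen U)
    (a : (Fin p → ℝ) × (Fin q → ℝ) → (H →L[ℂ] H'))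
    (ha : ContDiffOn ℝ (⊤ : ℕ∞) a (U ×ˢ (univ : Set (Fin q → ℝ))))
    (hhom : ∀ y ∈ U, ∀ η : Fin q → ℝ, C ≤ Real.sqrt (∑ j, η j ^ 2) →
      ∀ l : ℝ, 1 ≤ l →
        a (y, l • η) = ((l ^ μ : ℝ) : ℂ) • (κ' l).comp ((a (y, η)).comp (κ l⁻¹))) :
    SymbolEst μ κ κ' U a :=
  twisted_homogeneous_satisfies_symbolEst_general κ κ' hκ hκ' μ C U hU a ha hhom
end

section
/- Let γ ∈ ℝ, let f : ℝ → ℂ be measurable with |f(ρ)| ≤ C(1+|ρ|)^M, let μ ∈ ℝ, j ∈ ℕ, α ∈ ℕ^q, and let ω, ω' be cut-off functions. For η ∈ ℝ^q with |η| ≥ 1 and u ∈ C_c^∞((0,∞)) define m(η)u(r) := r^{−μ+j} η^α ω(r|η|) · (op_M^γ(f)[ ω'(·|η|) u ])(r), where op_M^γ(f)w(r) := (2π)^{−1} ∫_ℝ r^{−(1/2−γ+iρ)} f(ρ) Mw(1/2−γ+iρ) dρ. Then for all λ ≥ 1, all η with |η| ≥ 1, all u ∈ C_c^∞((0,∞))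 and all r > 0, m(λη)u(r) = λ^{μ−j+|α|} (κ_λ ∘ m(η) ∘ κ_λ^{−1}) u(r), where (κ_λ v)(r) := λ^{1/2} v(λ r). (This is the twisted homogeneity, for large |η|, of the smoothing Mellin edge symbols, in the case dim X = 0.) -/
open MeasureTheory Set

/-!
On the Mellin side the dilation `κ_a` becomes multiplication by a constant multiple of `a ^ (-z)`.
This scalar commutes with the symbol `h z`, so `κ_a` commutes with every Mellin operator. The
cut-offs depend on `r|η|` only, which is unchanged when `η` is replaced by `a η` and `r` by `r / a`,
and `r ^ ν η ^ α` is homogeneous under this replacement.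
-/

section Mellin

variable {E F : Type*} [NormedAddCommGroup E] [NormedSpace ℂ E]
  [NormedAddCommGroup F] [NormedSpace ℂ F]

/-- The dilation action `(κ_a v)(r) = a ^ b • v (a r)` of the multiplicative group `(0, ∞)`, with
normalization exponent `b`: `b = 1 / 2` makes `κ_a` unitary on `L²(0, ∞)`, and `b = (n + 1) / 2` is
the convention for edge symbols when `dim X = n`. -/
noncomputable def dilation (b a : ℝ) (v : ℝ → E) (r : ℝ) : E :=
  ((a ^ b : ℝ) : ℂ) • v (a * r)

/-- The weighted Mellin pseudo-differential operator `op_M^γ(h)`. The symbol `h` is operator-valued,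
and only its restriction to the line `Re z = 1 / 2 - γ` matters. -/
noncomputable def mellinOp (γ : ℝ) (h : ℂ → E →L[ℂ] F) (w : ℝ → E) : ℝ → F :=
  mellinInv (1 / 2 - γ) fun z => h z (mellin w z)

/-- The smoothing Mellin edge symbol
`m(η)u(r) = r ^ ν η ^ α ω(r|η|) (op_M^γ(h)[ω'(·|η|) u])(r)`, where `ν = -μ + j` in the notation of
the edge calculus. -/
noncomputable def smoothingMellinSymbol {ι : Type*} [Fintype ι] (γ ν : ℝ) (h : ℂ → E →L[ℂ] F)
    (α : ι → ℕ) (ω ω' : ℝ → ℂ) (η : EuclideanSpace ℝ ι) (u : ℝ → E) (r : ℝ) : F :=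
  ((r ^ ν * ∏ i, η i ^ α i : ℝ) : ℂ) • ω (r * ‖η‖) •
    mellinOp γ h (fun s => ω' (s * ‖η‖) • u s) r

lemma dilation_dilation_inv (b : ℝ) {a : ℝ} (ha : 0 < a) (v : ℝ → E) :
    dilation b a (dilation b a⁻¹ v) = v := by
  funext r
  have hcancel : a ^ b * a⁻¹ ^ b = 1 := by
    rw [← Real.mul_rpow ha.le (inv_nonneg.mpr ha.le), mul_inv_cancel₀ ha.ne', Real.one_rpow]
  rw [dilation, dilation, smul_smul, ← Complex.ofReal_mul, hcancel, Complex.ofReal_one, one_smul,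
    inv_mul_cancel_left₀ ha.ne']

lemma dilation_smul (b a : ℝ) (φ : ℝ → ℂ) (v : ℝ → E) :
    dilation b a (fun s => φ s • v s) = fun s => φ (a * s) • dilation b a v s :=
  funext fun _ => smul_comm _ _ _

lemma mellin_dilation (b : ℝ) {a : ℝ} (ha : 0 < a) (v : ℝ → E) (z : ℂ) :
    mellin (dilation b a v) z = ((a ^ b : ℝ) : ℂ) • (a : ℂ) ^ (-z) • mellin v z := by
  rw [← mellin_comp_mul_left v z ha, ← mellin_const_smul]
  rfl

lemma mellinInv_const_smul (σ : ℝ) (c : ℂ) (g : ℂ → E) (r : ℝ) :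
    mellinInv σ (fun z => c • g z) r = c • mellinInv σ g r := by
  simp only [mellinInv, smul_comm _ c, integral_smul]

lemma mellinInv_cpow_neg_smul (σ : ℝ) {a r : ℝ} (ha : 0 ≤ a) (hr : 0 ≤ r) (g : ℂ → E) :
    mellinInv σ (fun z => (a : ℂ) ^ (-z) • g z) r = mellinInv σ g (a * r) := by
  simp only [mellinInv, smul_smul, Complex.ofReal_mul, Complex.mul_cpow_ofReal_nonneg ha hr,
    mul_comm]

lemma mellinOp_dilation (γ : ℝ) (h : ℂ → E →L[ℂ] F) (b : ℝ) {a r : ℝ} (ha : 0 < a) (hr : 0 ≤ r)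
    (w : ℝ → E) : mellinOp γ h (dilation b a w) r = dilation b a (mellinOp γ h w) r := by
  simp only [mellinOp, dilation, mellin_dilation b ha, map_smul, mellinInv_const_smul,
    mellinInv_cpow_neg_smul _ ha.le hr]

end Mellin

lemma rpow_mul_prod_smul_pow {ι : Type*} [Fintype ι] (ν : ℝ) {a r : ℝ} (ha : 0 < a) (hr : 0 ≤ r)
    (η : EuclideanSpace ℝ ι) (α : ι → ℕ) :
    r ^ ν * ∏ i, (a • η) i ^ α i =
      a ^ (∑ i, (α i : ℝ) - ν) * ((a * r) ^ ν * ∏ i, η i ^ α i) := by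
  have hmonomial : ∏ i, (a • η) i ^ α i = a ^ (∑ i, (α i : ℝ)) * ∏ i, η i ^ α i := by
    simp only [PiLp.smul_apply, smul_eq_mul, mul_pow, Finset.prod_mul_distrib,
      Finset.prod_pow_eq_pow_sum, ← Nat.cast_sum, Real.rpow_natCast]
  rw [hmonomial, Real.rpow_sub ha, Real.mul_rpow ha.le hr]
  field_simp

lemma dilation_half_inv (a : ℝ) (u : ℝ → ℂ) :
    dilation (1 / 2) a⁻¹ u = fun s => ((Real.sqrt a : ℝ) : ℂ)⁻¹ * u (a⁻¹ * s) := by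
  funext s
  rw [dilation, ← Real.sqrt_eq_rpow, Real.sqrt_inv, Complex.ofReal_inv, smul_eq_mul]

lemma smoothingMellinSymbol_scalar_apply {ι : Type*} [Fintype ι] (γ ν : ℝ) (f : ℝ → ℂ)
    (α : ι → ℕ) (ω ω' : ℝ → ℂ) (η : ι → ℝ) (u : ℝ → ℂ) (r : ℝ) :
    smoothingMellinSymbol γ ν (fun z => f z.im • ContinuousLinearMap.id ℂ ℂ) α ω ω'
        (WithLp.toLp 2 η) u r =
      ((r ^ ν : ℝ) : ℂ) * (∏ i, ((η i : ℝ) : ℂ) ^ α i) * ω (r * Real.sqrt (∑ i, η i ^ 2)) *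
        ((2 * Real.pi)⁻¹ *
          ∫ ρ : ℝ, (r : ℂ) ^ (-((((1 : ℝ) / 2 - γ : ℝ) : ℂ) + ρ * Complex.I)) * f ρ *
            ∫ s in Ioi (0 : ℝ), (s : ℂ) ^ ((((1 : ℝ) / 2 - γ : ℝ) : ℂ) + ρ * Complex.I - 1) *
              (ω' (s * Real.sqrt (∑ i, η i ^ 2)) * u s)) := by
  have him (ρ : ℝ) : ((((1 : ℝ) / 2 - γ : ℝ) : ℂ) + ρ * Complex.I).im = ρ := by simp
  have hnorm : ‖WithLp.toLp 2 η‖ = Real.sqrt (∑ i, η i ^ 2) := by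
    simp only [EuclideanSpace.norm_eq, Real.norm_eq_abs, sq_abs]
  simp only [smoothingMellinSymbol, mellinOp, mellinInv, mellin, him, hnorm, smul_eq_mul,
    smul_apply, ContinuousLinearMap.id_apply, Complex.real_smul]
  push_cast
  simp only [one_div, mul_assoc]

theorem smoothing_mellin_symbol_twisted_homogeneous_general
    {E F ι : Type*} [NormedAddCommGroup E] [NormedSpace ℂ E] [NormedAddCommGroup F]
    [NormedSpace ℂ F] [Fintype ι] (γ ν b : ℝ) (h : ℂ → E →L[ℂ] F) (α : ι → ℕ) (ω ω' : ℝ → ℂ)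
    {a r : ℝ} (ha : 0 < a) (hr : 0 < r) (η : EuclideanSpace ℝ ι) (u : ℝ → E) :
    smoothingMellinSymbol γ ν h α ω ω' (a • η) u r =
      ((a ^ (∑ i, (α i : ℝ) - ν) : ℝ) : ℂ) •
        dilation b a (smoothingMellinSymbol γ ν h α ω ω' η (dilation b a⁻¹ u)) r := by
  have hnorm (s : ℝ) : s * ‖a • η‖ = a * s * ‖η‖ := by
    rw [norm_smul, Real.norm_of_nonneg ha.le]; ring
  have hcut : (fun s => ω' (s * ‖η‖) • dilation b a⁻¹ u s) =
      dilation b a⁻¹ fun s => ω' (s * ‖a • η‖) • u s := by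
    simp only [dilation_smul, hnorm, mul_inv_cancel_left₀ ha.ne']
  set w : ℝ → E := fun s => ω' (s * ‖a • η‖) • u s
  have hop : dilation b a (mellinOp γ h (dilation b a⁻¹ w)) r = mellinOp γ h w r := by
    rw [dilation, mellinOp_dilation γ h b (inv_pos.mpr ha) (mul_pos ha hr).le, ← dilation,
      dilation_dilation_inv b ha]
  calc smoothingMellinSymbol γ ν h α ω ω' (a • η) u r
      = ((r ^ ν * ∏ i, (a • η) i ^ α i : ℝ) : ℂ) • ω (r * ‖a • η‖) • mellinOp γ h w r := rfl
    _ = ((a ^ (∑ i, (α i : ℝ) - ν) : ℝ) : ℂ) • (((a * r) ^ ν * ∏ i, η i ^ α i : ℝ) : ℂ) •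
          ω (a * r * ‖η‖) • dilation b a (mellinOp γ h (dilation b a⁻¹ w)) r := by
        rw [rpow_mul_prod_smul_pow ν ha hr.le, Complex.ofReal_mul, mul_smul, hnorm, hop]
    _ = ((a ^ (∑ i, (α i : ℝ) - ν) : ℝ) : ℂ) •
          dilation b a (smoothingMellinSymbol γ ν h α ω ω' η (dilation b a⁻¹ u)) r := by
        rw [← hcut, dilation, smul_comm (ω _), smul_comm (Complex.ofReal (_ * _))]
        rfl

/-- Twisted homogeneity for large `|η|` of the smoothing Mellin edge symbols
(case `dim X = 0`): with
`m(η)u(r) = r^{-μ+j} η^α ω(r|η|) (op_M^γ(f)[ω'(·|η|)u])(r)` and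
`(κ_λ v)(r) = λ^{1/2} v(λ r)`, one has
`m(λη)u(r) = λ^{μ-j+|α|} (κ_λ ∘ m(η) ∘ κ_λ^{-1}) u(r)` for all `λ ≥ 1` and
`|η| ≥ 1`. -/
theorem smoothing_mellin_symbol_twisted_homogeneous
    (γ : ℝ) (f : ℝ → ℂ) (hf : Measurable f) (C M : ℝ)
    (hbd : ∀ ρ : ℝ, ‖f ρ‖ ≤ C * (1 + |ρ|) ^ M)
    (μ : ℝ) (j : ℕ) {q : ℕ} (α : Fin q → ℕ)
    (ω ω' : ℝ → ℝ)
    (hω : ContDiff ℝ (⊤ : ℕ∞) ω) (hωcs : HasCompactSupport ω)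
    (hωone : ∀ᶠ r in nhds (0 : ℝ), ω r = 1)
    (hω' : ContDiff ℝ (⊤ : ℕ∞) ω') (hω'cs : HasCompactSupport ω')
    (hω'one : ∀ᶠ r in nhds (0 : ℝ), ω' r = 1) :
    let en : (Fin q → ℝ) → ℝ := fun η => Real.sqrt (∑ i, η i ^ 2)
    let opM : (ℝ → ℂ) → ℝ → ℂ := fun w r => (2 * Real.pi)⁻¹ *
      ∫ ρ : ℝ, (r : ℂ) ^ (-((((1 : ℝ) / 2 - γ : ℝ) : ℂ) + ρ * Complex.I)) * f ρ *
        (∫ s in Ioi (0 : ℝ),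
          (s : ℂ) ^ ((((1 : ℝ) / 2 - γ : ℝ) : ℂ) + ρ * Complex.I - 1) * w s)
    let m : (Fin q → ℝ) → (ℝ → ℂ) → ℝ → ℂ := fun η u r =>
      ((r ^ (-μ + (j : ℝ)) : ℝ) : ℂ) * (∏ i, ((η i : ℝ) : ℂ) ^ α i) *
        ((ω (r * en η) : ℝ) : ℂ) * opM (fun s => ((ω' (s * en η) : ℝ) : ℂ) * u s) r
    ∀ lam : ℝ, 1 ≤ lam → ∀ η : Fin q → ℝ, 1 ≤ en η →
      ∀ u : ℝ → ℂ, ContDiff ℝ (⊤ : ℕ∞) u → HasCompactSupport u → tsupport u ⊆ Ioi (0 : ℝ) →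
        ∀ r : ℝ, 0 < r →
          m (lam • η) u r
            = ((lam ^ (μ - (j : ℝ) + ∑ i, (α i : ℝ)) : ℝ) : ℂ) *
                ((Real.sqrt lam : ℝ) : ℂ) *
                m η (fun s => (((Real.sqrt lam : ℝ) : ℂ))⁻¹ * u (lam⁻¹ * s)) (lam * r) := by
  intro en opM m lam hlam η _ u _ _ _ r hr
  have hm (η : Fin q → ℝ) (u : ℝ → ℂ) (r : ℝ) : m η u r =
      smoothingMellinSymbol γ (-μ + j) (fun z => f z.im • ContinuousLinearMap.id ℂ ℂ) α
        (fun s => (ω s : ℂ)) (fun s => (ω' s : ℂ)) (WithLp.toLp 2 η) u r := by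
    rw [smoothingMellinSymbol_scalar_apply]
  have hdeg : μ - (j : ℝ) + ∑ i, (α i : ℝ) = ∑ i, (α i : ℝ) - (-μ + j) := by ring
  rw [hm, hm, hdeg, ← dilation_half_inv, mul_assoc, WithLp.toLp_smul, Real.sqrt_eq_rpow]
  exact smoothing_mellin_symbol_twisted_homogeneous_general γ (-μ + j) (1 / 2) _ α _ _
    (zero_lt_one.trans_le hlam) hr _ u
end
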